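/- arXiv:math/0702117 — 2 statements merged into one kernel-verified Lean document; each statement's English description precedes it below -/
import Mathlib

section
/- Let G be a hyperbolic group and let K be a subgroup of G which is not a torsion group (K contains an element of infinite order). If the centralizer Z_G(K) is virtually ℤ (equivalently, by the previous result, if Z_G(K) is infinite), then K itself is virtually ℤ: K contains an infinite cyclic subgroup of finite index. -/
/-- The word metric on a group `G` with respect to a generating set `S`:
`wordDist S g h` is the least length of a word in `S ∪ S⁻¹` representing `g⁻¹ * h`. -/
noncomputable def wordDist {G : Type*} [Group G] (S : Set G) (g h : G) : ℝ :=
  sInf {r : ℝ | ∃ l : List G, (∀ x ∈ l, x ∈ S ∨ x⁻¹ ∈ S) ∧ l.prod = g⁻¹ * h ∧ r = l.length}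

/-- The Gromov product `(x|y)_w` with respect to the word metric for `S`. -/
noncomputable def gromovProd {G : Type*} [Group G] (S : Set G) (w x y : G) : ℝ :=
  (wordDist S x w + wordDist S y w - wordDist S x y) / 2

/-- A group is (Gromov) hyperbolic if it admits a finite generating set `S` such that
the word metric `d_S` satisfies the Gromov product four-point condition for some `δ ≥ 0`. -/
def IsHyperbolicGroup (G : Type*) [Group G] : Prop :=
  ∃ S : Set G, S.Finite ∧ Subgroup.closure S = ⊤ ∧
    ∃ δ : ℝ, 0 ≤ δ ∧ ∀ w x y z : G,
      gromovProd S w x y ≥ min (gromovProd S w x z) (gromovProd S w y z) - δ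

/-- A group is virtually `ℤ` if it is infinite and contains an infinite cyclic subgroup
of finite index. -/
def VirtuallyZ (H : Type*) [Group H] : Prop :=
  Infinite H ∧ ∃ K : Subgroup H, K.FiniteIndex ∧ IsCyclic K ∧ Infinite K

/-!
Let `g` have infinite order and let `c` commute with `g`. Choose a power `h` of `g` very far from
`1` and a point `m` on a geodesic `[1, h]`, far from both ends. Since `c * h = h * c`, left
translation by `c` moves both endpoints of `[1, h]` by `|c|` only, so hyperbolicity puts `c * m`
within `6δ` of one of the `2M + 1` points of `[1, h]` at distance within `M ≥ |c|` from `m`.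
Hence at most `(2M + 1) * B` elements of length at most `M` centralize `g`, where `B` is the number
of elements of a ball of radius `6δ`. On the other hand, the translates of the powers of `g` by
representatives of `N` cosets of `⟨g⟩` already give growth about `N * M / |g|`, so `⟨g⟩` has
finite index in the centralizer of `g`. A subgroup `K` centralized by `g` lies in that
centralizer, and therefore `⟨g⟩ ∩ K` is a cyclic subgroup of finite index in `K`.
-/

open Metric Subgroup

section GromovHyperbolic

/-- `δ`-hyperbolicity of a metric space. This is the four-point condition on Gromov products
with the products written out in terms of distances, hence the factor `2`. -/
def IsGromovHyperbolic (X : Type*) [PseudoMetricSpace X] (δ : ℝ) : Prop :=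
  ∀ x y z w : X, dist x y + dist z w ≤ max (dist x z + dist y w) (dist y z + dist x w) + 2 * δ

/-- Distances are natural numbers and any two points at distance `n` are joined by points at all
intermediate integer distances, as for the vertex set of a connected graph. -/
def IsDiscretelyGeodesic (X : Type*) [PseudoMetricSpace X] : Prop :=
  ∀ x y : X, ∃ n : ℕ, dist x y = n ∧ ∀ i ≤ n, ∃ p, dist x p = i ∧ dist x p + dist p y = dist x y

namespace IsGromovHyperbolic

variable {X : Type*} [PseudoMetricSpace X] {δ ε : ℝ} {x x' y y' m p : X}

theorem nonneg [Nonempty X] (hX : IsGromovHyperbolic X δ) : 0 ≤ δ := by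
  obtain ⟨x⟩ := ‹Nonempty X›
  simpa using hX x x x x

-- The excess `dist x m + dist m y - dist x y` measures how far `m` is from a geodesic `[x, y]`:
-- moving an endpoint that stays far from `m` increases it by at most `2 * δ`.
theorem dist_add_dist_le_of_dist_lt (hX : IsGromovHyperbolic X δ)
    (hm : dist x' m + dist m y ≤ dist x' y + 2 * ε) (hx : dist x x' + ε + δ < dist x' m) :
    dist x m + dist m y ≤ dist x y + 2 * (ε + δ) := by
  have four_point := hX x' y x m
  have triangle := dist_triangle x' x m
  rw [dist_comm x' x] at four_point triangle
  rw [dist_comm y m, dist_comm y x] at four_point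
  rcases le_max_iff.1 (sub_le_iff_le_add.2 four_point) with h | h <;> linarith

theorem dist_le_of_dist_eq (hX : IsGromovHyperbolic X δ)
    (hp : dist x p + dist p y = dist x y) (hpm : dist x p = dist x m) :
    dist p m ≤ dist x m + dist m y - dist x y + 2 * δ := by
  have four_point := hX x y p m
  have triangle := dist_triangle x m y
  rw [dist_comm y m, dist_comm y p] at four_point
  rcases le_max_iff.1 (sub_le_iff_le_add.2 four_point) with h | h <;> linarith

theorem dist_le_six_mul_of_quadrilateral (hX : IsGromovHyperbolic X δ)
    (hm : dist x' m + dist m y' = dist x' y')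
    (hx : dist x x' + 2 * δ < dist x' m) (hy : dist y y' + 2 * δ < dist m y')
    (hp : dist x p + dist p y = dist x y) (hpm : dist x p = dist x m) :
    dist p m ≤ 6 * δ := by
  have hδ : 0 ≤ δ := have : Nonempty X := ⟨x⟩; hX.nonneg
  have near_x : dist x m + dist m y' ≤ dist x y' + 2 * (0 + δ) :=
    hX.dist_add_dist_le_of_dist_lt (x' := x') (by linarith) (by linarith)
  have near_y : dist y m + dist m x ≤ dist y x + 2 * (δ + δ) := by
    refine hX.dist_add_dist_le_of_dist_lt (x' := y') ?_ ?_
    · linarith [dist_comm y' m, dist_comm m x, dist_comm y' x]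
    · linarith [dist_comm y' m]
  linarith [hX.dist_le_of_dist_eq hp hpm, dist_comm y m, dist_comm m x, dist_comm y x]

end IsGromovHyperbolic

end GromovHyperbolic

section LeftInvariantMetric

variable {G : Type*} [Group G] {g : G}

theorem injective_out_mul_pow (hg : ¬IsOfFinOrder g) :
    Function.Injective fun q : (G ⧸ zpowers g) × ℕ ↦ q.1.out * g ^ q.2 := by
  rintro ⟨s, i⟩ ⟨t, j⟩ (hst : s.out * g ^ i = t.out * g ^ j)
  have mk_out_mul_pow (q : G ⧸ zpowers g) (k : ℕ) : (q.out * g ^ k : G ⧸ zpowers g) = q := by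
    rw [QuotientGroup.mk_mul_of_mem _ (npow_mem_zpowers g k), QuotientGroup.out_eq']
  obtain rfl : s = t := by rw [← mk_out_mul_pow s i, hst, mk_out_mul_pow]
  exact congrArg (s, ·) (injective_pow_iff_not_isOfFinOrder.2 hg (mul_left_cancel hst))

variable [PseudoMetricSpace G]

theorem exists_lt_dist_one_pow (hfin : ∀ r, (closedBall (1 : G) r).Finite)
    (hg : ¬IsOfFinOrder g) (r : ℝ) : ∃ n : ℕ, r < dist 1 (g ^ n) := by
  by_contra! hle
  refine Set.infinite_range_of_injective (injective_pow_iff_not_isOfFinOrder.2 hg)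
    ((hfin r).subset ?_)
  rintro _ ⟨n, rfl⟩
  exact mem_closedBall'.2 (hle n)

variable [IsIsometricSMul G G] {δ : ℝ}

theorem dist_self_mul_eq_dist_one (g u : G) : dist g (g * u) = dist 1 u := by
  simpa only [mul_one] using dist_mul_left g 1 u

theorem dist_one_mul_le (g u : G) : dist 1 (g * u) ≤ dist 1 g + dist 1 u := by
  simpa only [dist_self_mul_eq_dist_one] using dist_triangle 1 g (g * u)

theorem dist_one_pow_le (g : G) (n : ℕ) : dist 1 (g ^ n) ≤ n * dist 1 g := by
  simpa [pow_succ, dist_self_mul_eq_dist_one] using dist_le_range_sum_dist (g ^ ·) n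

theorem encard_closedBall_eq_encard_closedBall_one (g : G) (r : ℝ) :
    (closedBall g r).encard = (closedBall (1 : G) r).encard := by
  rw [← Set.encard_smul_set g (closedBall 1 r), Metric.smul_closedBall, smul_eq_mul, mul_one]

theorem finiteIndex_zpowers_of_encard_closedBall_le {a b : ℕ}
    (hgrowth : ∀ n : ℕ, (closedBall (1 : G) n).encard ≤ (a * n + b : ℕ))
    (hg : ¬IsOfFinOrder g) : (zpowers g).FiniteIndex := by
  classical
  rw [finiteIndex_iff_finite_quotient]
  by_contra hinf
  rw [not_finite_iff_infinite] at hinf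
  obtain ⟨A, hA⟩ := exists_nat_ge (dist 1 g)
  obtain ⟨T, hT⟩ := Infinite.exists_subset_card_eq (G ⧸ zpowers g) (a * A + 1)
  obtain ⟨r, hr⟩ := (T.image fun t ↦ dist 1 t.out).bddAbove
  obtain ⟨R, hR⟩ := exists_nat_ge r
  let f : (G ⧸ zpowers g) × ℕ → G := fun q ↦ q.1.out * g ^ q.2
  have maps_to (n : ℕ) :
      ((T ×ˢ Finset.range n).image f : Set G) ⊆ closedBall 1 (R + n * A : ℕ) := by
    intro x hx
    obtain ⟨⟨t, k⟩, htk, rfl⟩ := Finset.mem_image.1 hx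
    obtain ⟨ht, hk⟩ := Finset.mem_product.1 htk
    have hkn : (k : ℝ) ≤ n := by exact_mod_cast (Finset.mem_range.1 hk).le
    have htR : dist 1 t.out ≤ R := (hr (Finset.mem_image_of_mem _ ht)).trans hR
    rw [mem_closedBall', Nat.cast_add, Nat.cast_mul]
    calc dist 1 (t.out * g ^ k)
        ≤ dist 1 t.out + dist 1 (g ^ k) := dist_one_mul_le _ _
      _ ≤ dist 1 t.out + k * dist 1 g := by gcongr; exact dist_one_pow_le g k
      _ ≤ R + n * A := by gcongr
  have card_le (n : ℕ) : (a * A + 1) * n ≤ a * (R + n * A) + b := by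
    have := (Set.encard_le_encard (maps_to n)).trans (hgrowth _)
    rwa [Set.encard_coe_eq_coe_finsetCard,
      Finset.card_image_of_injective _ (injective_out_mul_pow hg), Finset.card_product, hT,
      Finset.card_range, Nat.cast_le] at this
  linarith [card_le (a * R + b + 1)]

namespace IsGromovHyperbolic

theorem dist_mul_le_of_commute (hG : IsGromovHyperbolic G δ) {c h m p : G}
    (hc : Commute c h) (hm : dist 1 m + dist m h = dist 1 h)
    (hcm : dist 1 c + 2 * δ < dist 1 m) (hch : dist 1 c + 2 * δ < dist m h)
    (hp : dist 1 p + dist p h = dist 1 h) (hpm : dist 1 p = dist 1 (c * m)) :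
    dist p (c * m) ≤ 6 * δ := by
  apply hG.dist_le_six_mul_of_quadrilateral (x' := c) (y' := c * h) _ _ _ hp hpm
  · rwa [dist_self_mul_eq_dist_one, dist_self_mul_eq_dist_one, dist_mul_left]
  · rwa [dist_self_mul_eq_dist_one]
  · rwa [hc.eq, dist_self_mul_eq_dist_one, ← hc.eq, dist_mul_left]

theorem image_centralizer_inter_closedBall_subset (hG : IsGromovHyperbolic G δ)
    (hgeo : IsDiscretelyGeodesic G) {h : G} {p : ℕ → G} {M E L : ℕ}
    (hp : ∀ i ≤ L, dist 1 (p i) = i ∧ dist 1 (p i) + dist (p i) h = dist 1 h)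
    (hL : dist 1 h = L) (hE : 2 * δ < E) (hEL : 2 * (M + E) < L) :
    (· * p (M + E)) '' ((centralizer {h} : Set G) ∩ closedBall 1 M) ⊆
      ⋃ t ∈ Finset.Icc E (E + 2 * M), closedBall (p t) (6 * δ) := by
  rintro _ ⟨c, ⟨hch, hcM⟩, rfl⟩
  rw [mem_closedBall'] at hcM
  obtain ⟨hm, hm_between⟩ := hp (M + E) (by lia)
  set m := p (M + E)
  obtain ⟨t, ht, -⟩ := hgeo 1 (c * m)
  rw [Nat.cast_add] at hm
  have E_le : E ≤ t := by
    have triangle := dist_triangle_left c (c * m) 1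
    rw [dist_self_mul_eq_dist_one, hm] at triangle
    exact_mod_cast (by linarith : (E : ℝ) ≤ t)
  have le_add : t ≤ E + 2 * M := by
    have triangle := dist_one_mul_le c m
    exact_mod_cast (by linarith : (t : ℝ) ≤ E + 2 * M)
  obtain ⟨hpt, hpt_between⟩ := hp t (by lia)
  refine Set.mem_biUnion (Finset.mem_coe.2 (Finset.mem_Icc.2 ⟨E_le, le_add⟩)) ?_
  have hEL : 2 * ((M : ℝ) + E) < L := by exact_mod_cast hEL
  exact mem_closedBall'.2 (hG.dist_mul_le_of_commute (mem_centralizer_singleton_iff.1 hch)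
    hm_between (by linarith) (by linarith) hpt_between (hpt.trans ht.symm))

theorem encard_centralizer_inter_closedBall_le (hG : IsGromovHyperbolic G δ)
    (hgeo : IsDiscretelyGeodesic G) (hfin : ∀ r, (closedBall (1 : G) r).Finite)
    (hg : ¬IsOfFinOrder g) (M : ℕ) :
    ((centralizer {g} : Set G) ∩ closedBall 1 M).encard ≤
      (2 * M + 1 : ℕ) * (closedBall (1 : G) (6 * δ)).encard := by
  obtain ⟨E, hE⟩ := exists_nat_gt (2 * δ)
  obtain ⟨n, hn⟩ := exists_lt_dist_one_pow hfin hg (2 * (M + E) : ℕ)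
  obtain ⟨L, hL, hpoint⟩ := hgeo 1 (g ^ n)
  choose! p hp using hpoint
  have hEL : 2 * (M + E) < L := by exact_mod_cast hL ▸ hn
  have centralizer_le : centralizer {g} ≤ centralizer {g ^ n} := fun c hc ↦
    mem_centralizer_singleton_iff.2
      (Commute.pow_right (mem_centralizer_singleton_iff.1 hc : Commute c g) n)
  calc ((centralizer {g} : Set G) ∩ closedBall 1 M).encard
      ≤ ((centralizer {g ^ n} : Set G) ∩ closedBall 1 M).encard :=
        Set.encard_le_encard (Set.inter_subset_inter_left _ centralizer_le)
    _ = ((· * p (M + E)) '' ((centralizer {g ^ n} : Set G) ∩ closedBall 1 M)).encard :=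
        ((mul_left_injective _).encard_image _).symm
    _ ≤ (⋃ t ∈ Finset.Icc E (E + 2 * M), closedBall (p t) (6 * δ)).encard :=
        Set.encard_le_encard (hG.image_centralizer_inter_closedBall_subset hgeo hp hL hE hEL)
    _ ≤ ∑ t ∈ Finset.Icc E (E + 2 * M), (closedBall (p t) (6 * δ)).encard :=
        Finset.set_encard_biUnion_le _ _
    _ = (2 * M + 1 : ℕ) * (closedBall (1 : G) (6 * δ)).encard := by
        simp only [encard_closedBall_eq_encard_closedBall_one, Finset.sum_const, Nat.card_Icc,
          nsmul_eq_mul]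
        congr 2
        lia

theorem isFiniteRelIndex_zpowers_centralizer (hG : IsGromovHyperbolic G δ)
    (hgeo : IsDiscretelyGeodesic G) (hfin : ∀ r, (closedBall (1 : G) r).Finite)
    (hg : ¬IsOfFinOrder g) : (zpowers g).IsFiniteRelIndex (centralizer {g}) := by
  let C := centralizer {g}
  let g' : C := ⟨g, mem_centralizer_singleton_iff.2 rfl⟩
  have : IsIsometricSMul C C := ⟨fun c x y ↦ edist_mul_left (c : G) x y⟩
  let B := (hfin (6 * δ)).toFinset.card
  have growth (n : ℕ) : (closedBall (1 : C) n).encard ≤ (2 * B * n + B : ℕ) :=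
    calc (closedBall (1 : C) n).encard
        = ((↑) '' closedBall (1 : C) n : Set G).encard :=
          (Subtype.val_injective.encard_image _).symm
      _ ≤ ((C : Set G) ∩ closedBall 1 n).encard := by
          apply Set.encard_le_encard
          rintro _ ⟨c, hc, rfl⟩
          exact ⟨c.2, hc⟩
      _ ≤ (2 * n + 1 : ℕ) * (closedBall (1 : G) (6 * δ)).encard :=
          hG.encard_centralizer_inter_closedBall_le hgeo hfin hg n
      _ = (2 * B * n + B : ℕ) := by
          rw [(hfin _).encard_eq_coe_toFinset_card, ← Nat.cast_mul]
          congr 1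
          ring
  have hzpowers : (zpowers g).subgroupOf C = zpowers g' := by
    rw [show zpowers g = (zpowers g').map C.subtype from (C.subtype.map_zpowers g').symm]
    exact comap_map_eq_self_of_injective C.subtype_injective _
  rw [isFiniteRelIndex_iff_finiteIndex, hzpowers]
  exact finiteIndex_zpowers_of_encard_closedBall_le growth
    (mt (Submonoid.isOfFinOrder_coe (x := g')).2 hg)

end IsGromovHyperbolic

end LeftInvariantMetric

section WordMetric

variable {G : Type*} [Group G] {S : Set G} {l l₁ l₂ : List G} {g h : G} {δ : ℝ}

/-- The list `l` is a word in the letters `S ∪ S⁻¹`; `wordDist S` minimizes over such words. -/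
def IsWord (S : Set G) (l : List G) : Prop := ∀ x ∈ l, x ∈ S ∨ x⁻¹ ∈ S

theorem IsWord.append (h₁ : IsWord S l₁) (h₂ : IsWord S l₂) : IsWord S (l₁ ++ l₂) :=
  fun x hx ↦ (List.mem_append.1 hx).elim (h₁ x) (h₂ x)

theorem IsWord.reverse_map_inv (hl : IsWord S l) : IsWord S (l.map (·⁻¹)).reverse := by
  intro x hx
  obtain ⟨y, hy, rfl⟩ := List.mem_map.1 (List.mem_reverse.1 hx)
  rw [inv_inv]
  exact (hl y hy).symm

theorem exists_isWord_prod_eq (hS : closure S = ⊤) (g : G) : ∃ l, IsWord S l ∧ l.prod = g := by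
  have hg : g ∈ (closure S).toSubmonoid := hS ▸ mem_top g
  rw [closure_toSubmonoid] at hg
  exact Submonoid.exists_list_of_mem_closure hg

theorem wordDist_le_length (hl : IsWord S l) (hprod : l.prod = g⁻¹ * h) :
    wordDist S g h ≤ l.length := by
  refine csInf_le ⟨0, ?_⟩ ⟨l, hl, hprod, rfl⟩
  rintro _ ⟨l', -, -, rfl⟩
  positivity

theorem exists_isWord_length_eq_wordDist (hS : closure S = ⊤) (g h : G) :
    ∃ l, IsWord S l ∧ l.prod = g⁻¹ * h ∧ wordDist S g h = l.length := by
  obtain ⟨l, ⟨hl, hprod⟩, hmin⟩ := exists_minimalFor_of_wellFoundedLT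
    (fun l ↦ IsWord S l ∧ l.prod = g⁻¹ * h) List.length (exists_isWord_prod_eq hS (g⁻¹ * h))
  refine ⟨l, hl, hprod, IsLeast.csInf_eq ⟨⟨l, hl, hprod, rfl⟩, ?_⟩⟩
  rintro _ ⟨l', hl', hprod', rfl⟩
  exact Nat.cast_le.2 ((le_total _ _).elim id (hmin ⟨hl', hprod'⟩))

theorem wordDist_nonneg (S : Set G) (g h : G) : 0 ≤ wordDist S g h := by
  apply Real.sInf_nonneg
  rintro _ ⟨l, -, -, rfl⟩
  positivity

theorem wordDist_self (S : Set G) (g : G) : wordDist S g g = 0 := by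
  apply le_antisymm _ (wordDist_nonneg S g g)
  simpa using wordDist_le_length (S := S) (l := []) (g := g) (h := g) (by simp [IsWord]) (by simp)

theorem wordDist_mul_left (S : Set G) (k g h : G) :
    wordDist S (k * g) (k * h) = wordDist S g h := by
  simp only [wordDist, mul_inv_rev, mul_assoc, inv_mul_cancel_left]

theorem wordDist_comm (hS : closure S = ⊤) (g h : G) : wordDist S g h = wordDist S h g := by
  suffices wordDist_le : ∀ g h, wordDist S g h ≤ wordDist S h g from
    (wordDist_le g h).antisymm (wordDist_le h g)
  intro g h
  obtain ⟨l, hl, hprod, hlength⟩ := exists_isWord_length_eq_wordDist hS h g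
  have hprod_inv : (l.map (·⁻¹)).reverse.prod = g⁻¹ * h := by
    rw [← List.prod_inv_reverse, hprod, mul_inv_rev, inv_inv]
  simpa [hlength] using wordDist_le_length hl.reverse_map_inv hprod_inv

theorem wordDist_triangle (hS : closure S = ⊤) (g h k : G) :
    wordDist S g k ≤ wordDist S g h + wordDist S h k := by
  obtain ⟨l₁, hl₁, hprod₁, hlength₁⟩ := exists_isWord_length_eq_wordDist hS g h
  obtain ⟨l₂, hl₂, hprod₂, hlength₂⟩ := exists_isWord_length_eq_wordDist hS h k
  have hprod : (l₁ ++ l₂).prod = g⁻¹ * k := by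
    rw [List.prod_append, hprod₁, hprod₂, mul_assoc, mul_inv_cancel_left]
  simpa [hlength₁, hlength₂] using wordDist_le_length (hl₁.append hl₂) hprod

/-- The word metric of a generating set as a metric structure. It is a definition and not an
instance because it depends on `S`. -/
@[reducible]
noncomputable def wordPseudoMetricSpace (hS : closure S = ⊤) : PseudoMetricSpace G where
  dist := wordDist S
  dist_self := wordDist_self S
  dist_comm := wordDist_comm hS
  dist_triangle := wordDist_triangle hS

theorem isIsometricSMul_wordPseudoMetricSpace (hS : closure S = ⊤) :
    letI := wordPseudoMetricSpace hS
    IsIsometricSMul G G :=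
  letI := wordPseudoMetricSpace hS
  ⟨fun k ↦ Isometry.of_dist_eq (wordDist_mul_left S k)⟩

theorem isDiscretelyGeodesic_wordPseudoMetricSpace (hS : closure S = ⊤) :
    letI := wordPseudoMetricSpace hS
    IsDiscretelyGeodesic G := by
  intro g h
  obtain ⟨l, hl, hprod, hlength⟩ := exists_isWord_length_eq_wordDist hS g h
  refine ⟨l.length, hlength, fun i hi ↦ ⟨g * (l.take i).prod, ?_⟩⟩
  have hdrop : (l.drop i).prod = (g * (l.take i).prod)⁻¹ * h := by
    rw [mul_inv_rev, mul_assoc, ← hprod, ← l.prod_take_mul_prod_drop i, inv_mul_cancel_left]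
  have dist_take_le : wordDist S g (g * (l.take i).prod) ≤ i := by
    have := wordDist_le_length (fun x hx ↦ hl x (List.mem_of_mem_take hx))
      (inv_mul_cancel_left g (l.take i).prod).symm
    rwa [List.length_take_of_le hi] at this
  have dist_drop_le : wordDist S (g * (l.take i).prod) h ≤ l.length - i := by
    have := wordDist_le_length (fun x hx ↦ hl x (List.mem_of_mem_drop hx)) hdrop
    rwa [List.length_drop, Nat.cast_sub hi] at this
  have triangle := wordDist_triangle hS g (g * (l.take i).prod) h
  change wordDist S _ _ = _ ∧ wordDist S _ _ + wordDist S _ _ = wordDist S _ _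
  constructor <;> linarith

theorem finite_setOf_wordDist_one_le (hfin : S.Finite) (hS : closure S = ⊤) (r : ℝ) :
    {g | wordDist S g 1 ≤ r}.Finite := by
  have : Finite ↥(S ∪ S⁻¹) := hfin.union hfin.inv
  refine ((List.finite_length_le ↥(S ∪ S⁻¹) ⌊r⌋₊).image
    fun l ↦ (l.map Subtype.val).prod).subset fun g hg ↦ ?_
  obtain ⟨l, hl, hprod, hlength⟩ := exists_isWord_length_eq_wordDist hS 1 g
  lift l to List ↥(S ∪ S⁻¹) using hl
  refine ⟨l, Nat.le_floor ?_, by simpa using hprod⟩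
  rw [List.length_map, wordDist_comm hS] at hlength
  exact hlength ▸ hg

theorem isGromovHyperbolic_wordPseudoMetricSpace (hS : closure S = ⊤)
    (hδ : ∀ w x y z : G,
      gromovProd S w x y ≥ min (gromovProd S w x z) (gromovProd S w y z) - δ) :
    letI := wordPseudoMetricSpace hS
    IsGromovHyperbolic G δ := by
  intro x y z w
  change wordDist S x y + wordDist S z w ≤
    max (wordDist S x z + wordDist S y w) (wordDist S y z + wordDist S x w) + 2 * δ
  have four_point := hδ w x y z
  simp only [gromovProd] at four_point
  rw [← sub_le_iff_le_add, le_max_iff]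
  rcases min_le_iff.1 (sub_le_iff_le_add.1 four_point) with h | h
  · left; linarith
  · right; linarith

end WordMetric

theorem IsHyperbolicGroup.isFiniteRelIndex_zpowers_centralizer {G : Type*} [Group G]
    (hG : IsHyperbolicGroup G) {g : G} (hg : ¬IsOfFinOrder g) :
    (zpowers g).IsFiniteRelIndex (centralizer {g}) := by
  obtain ⟨S, hfin, hS, δ, -, hδ⟩ := hG
  let := wordPseudoMetricSpace hS
  have := isIsometricSMul_wordPseudoMetricSpace hS
  exact (isGromovHyperbolic_wordPseudoMetricSpace hS hδ).isFiniteRelIndex_zpowers_centralizer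
    (isDiscretelyGeodesic_wordPseudoMetricSpace hS) (finite_setOf_wordDist_one_le hfin hS) hg

section VirtuallyZ

variable {G : Type*} [Group G]

theorem infinite_of_forall_zpow_ne_one {K : Subgroup G} {k : G} (hkK : k ∈ K)
    (hk : ∀ n : ℤ, n ≠ 0 → k ^ n ≠ 1) : Infinite K := by
  have hk_order : ¬IsOfFinOrder k := by simpa [isOfFinOrder_iff_zpow_eq_one] using hk
  exact ((infinite_zpowers.2 hk_order).mono (zpowers_le.2 hkK)).to_subtype

theorem VirtuallyZ.exists_mem_not_isOfFinOrder {H : Subgroup G} (hH : VirtuallyZ H) :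
    ∃ z ∈ H, ¬IsOfFinOrder z := by
  obtain ⟨-, Z, -, hcyclic, hinfinite⟩ := hH
  obtain ⟨z, hz⟩ := hcyclic.exists_generator
  have hz_order : ¬IsOfFinOrder z :=
    orderOf_eq_zero_iff.1 (Infinite.orderOf_eq_zero_of_forall_mem_zpowers hz)
  exact ⟨z, z.1.2, by rwa [Submonoid.isOfFinOrder_coe, Submonoid.isOfFinOrder_coe]⟩

theorem VirtuallyZ.of_isCyclic_of_finiteIndex [Infinite G] (Z : Subgroup G) [IsCyclic Z]
    [Z.FiniteIndex] : VirtuallyZ G := by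
  have hinfinite : Infinite Z := by
    by_contra hfinite
    rw [not_infinite_iff_finite] at hfinite
    have : Finite G := (finite_iff_finite_and_finiteIndex Z).2 ⟨hfinite, inferInstance⟩
    exact not_finite G
  exact ⟨inferInstance, Z, inferInstance, inferInstance, hinfinite⟩

theorem isCyclic_subgroupOf (H K : Subgroup G) [IsCyclic H] : IsCyclic (H.subgroupOf K) :=
  isCyclic_of_injective (K.subtype.subgroupComap H) fun _ _ hxy ↦
    Subtype.ext (K.subtype_injective (congrArg (Subtype.val : H → G) hxy))

end VirtuallyZ

theorem stmt_8_general {G : Type*} [Group G] (hG : IsHyperbolicGroup G) (K : Subgroup G)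
    [Infinite K] (hZ : ∃ z ∈ centralizer (K : Set G), ¬IsOfFinOrder z) : VirtuallyZ K := by
  obtain ⟨z, hzK, hz⟩ := hZ
  have hK : K ≤ centralizer {z} := fun k hk ↦ mem_centralizer_singleton_iff.2 (hzK k hk)
  have hindex := hG.isFiniteRelIndex_zpowers_centralizer hz
  have : (zpowers z).IsFiniteRelIndex K :=
    ⟨mt (relIndex_eq_zero_of_le_right hK) hindex.relIndex_ne_zero⟩
  have := isCyclic_subgroupOf (zpowers z) K
  exact .of_isCyclic_of_finiteIndex ((zpowers z).subgroupOf K)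

/-- In a hyperbolic group, if `K` is a non-torsion subgroup whose centralizer is
virtually `ℤ`, then `K` itself is virtually `ℤ`. -/
theorem stmt_8 {G : Type*} [Group G] (hG : IsHyperbolicGroup G)
    (K : Subgroup G) (hK : ∃ k ∈ K, ∀ n : ℤ, n ≠ 0 → k ^ n ≠ 1)
    (hZ : VirtuallyZ (Subgroup.centralizer (K : Set G))) :
    VirtuallyZ K := by
  obtain ⟨k, hkK, hk⟩ := hK
  have : Infinite K := infinite_of_forall_zpow_ne_one hkK hk
  exact stmt_8_general hG K hZ.exists_mem_not_isOfFinOrder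
end

section
/- Let G be a hyperbolic group which is not a torsion group (G contains an element of infinite order) and which is not elementary, i.e. not virtually cyclic. Then the center Z(G) of G is finite. -/
/-! Let `|g|` denote word length, and let `z` be a central element that is long compared with `g`
and `h`. The increment `b_z(g) = |zg| - |z|` is the Busemann function of the point `z⁻¹`. The
four-point condition for `1, g, zg, zgh`, where the pairing `{1, g}, {zg, zgh}` is negligible, shows
that `b_z` is additive up to a constant. If `|b_z(h)| ≤ c`, then the geodesics from `1` to `z` and
from `h` to `hz` are synchronised up to `c`, so a point `m` deep inside the former satisfies
`|m⁻¹hm| ≤ 3c + const`; hence the number of such `h` is bounded independently of `z`.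

If the center is infinite, a limit of the `b_z` along an ultrafilter is thus a quasimorphism `f` to
the integers such that each set `{|f| ≤ c}` is finite. Either `f` is bounded and the group is
finite, or some `h` has `|f h|` larger than the defect of `f`; multiplying by powers of `h` then
brings `f` into a bounded range, so that `⟨h⟩` has finite index.
-/

section Quasimorphism

variable {G : Type*} [Group G]

/-- An integer-valued quasimorphism of defect at most `D`, i.e. a map that is additive up to an
error of at most `D`. -/
def IsQuasimorphism (f : G → ℤ) (D : ℤ) : Prop :=
  ∀ g h, |f (g * h) - f g - f h| ≤ D

variable {f : G → ℤ} {D : ℤ} {h : G}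

lemma IsQuasimorphism.exists_natAbs_mul_zpow_lt (hf : IsQuasimorphism f D) (hh : D < |f h|) {g : G}
    (hg : |f h| + D < |f g|) : ∃ e : ℤ, (f (g * h ^ e)).natAbs < (f g).natAbs := by
  have hstep := hf g h
  have hstep_inv := hf (g * h⁻¹) h
  rw [inv_mul_cancel_right] at hstep_inv
  suffices (f (g * h)).natAbs < (f g).natAbs ∨ (f (g * h⁻¹)).natAbs < (f g).natAbs from
    this.elim (fun hlt => ⟨1, by rwa [zpow_one]⟩) (fun hlt => ⟨-1, by rwa [zpow_neg_one]⟩)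
  rw [abs_le] at hstep hstep_inv
  grind

lemma IsQuasimorphism.exists_abs_mul_zpow_le (hf : IsQuasimorphism f D) (hh : D < |f h|) (g : G) :
    ∃ k : ℤ, |f (g * h ^ k)| ≤ |f h| + D := by
  let k := Function.argmin fun k : ℤ => (f (g * h ^ k)).natAbs
  use k
  by_contra! hlarge
  obtain ⟨e, he⟩ := hf.exists_natAbs_mul_zpow_lt hh hlarge
  rw [mul_assoc, ← zpow_add] at he
  exact Function.not_lt_argmin (fun k : ℤ => (f (g * h ^ k)).natAbs) (k + e) he

lemma finiteIndex_zpowers_of_forall_exists_mul_zpow_mem {s : Set G} (hs : s.Finite)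
    (hmem : ∀ g, ∃ k : ℤ, g * h ^ k ∈ s) : (Subgroup.zpowers h).FiniteIndex := by
  have hcover : (QuotientGroup.mk '' s : Set (G ⧸ Subgroup.zpowers h)) = Set.univ := by
    refine Set.eq_univ_of_forall fun q => ?_
    obtain ⟨g, rfl⟩ := QuotientGroup.mk_surjective q
    obtain ⟨k, hk⟩ := hmem g
    exact ⟨_, hk, QuotientGroup.mk_mul_of_mem g (Subgroup.zpow_mem_zpowers h k)⟩
  have : Finite (G ⧸ Subgroup.zpowers h) := Set.finite_univ_iff.1 (hcover ▸ hs.image _)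
  exact Subgroup.finiteIndex_of_finite_quotient

lemma IsQuasimorphism.exists_finiteIndex_isCyclic (hf : IsQuasimorphism f D)
    (hfin : ∀ c, {g | |f g| ≤ c}.Finite) : ∃ H : Subgroup G, H.FiniteIndex ∧ IsCyclic H := by
  by_cases! hlarge : ∃ h, D < |f h|
  · obtain ⟨h, hh⟩ := hlarge
    exact ⟨Subgroup.zpowers h, finiteIndex_zpowers_of_forall_exists_mul_zpow_mem (hfin (|f h| + D))
      (hf.exists_abs_mul_zpow_le hh), inferInstance⟩
  · have : Finite G := Set.finite_univ_iff.1 ((hfin D).subset fun g _ => hlarge g)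
    exact ⟨⊥, inferInstance, inferInstance⟩

end Quasimorphism

section FourPoint

variable {X : Type*} {d : X → X → ℤ} {D : ℤ}

/-- Gromov's four-point condition for an integer-valued distance: of the three ways to split four
points into two pairs, the two with the largest sums of distances differ by at most `D`. For a
distance function this is the Gromov product condition with constant `D / 2`. -/
def IsFourPoint (d : X → X → ℤ) (D : ℤ) : Prop :=
  ∀ x y z w, d x y + d z w ≤ max (d x z + d y w) (d x w + d y z) + D

lemma IsFourPoint.dist_le_of_synchronised (hd : IsFourPoint d D) (hsymm : ∀ x y, d x y = d y x)
    {x y m x' y' m' : X} {L n : ℕ} {c : ℤ} (hnL : 2 * n ≤ L)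
    (hxy : d x y = L) (hxm : d x m = n) (hmy : n + d m y = L)
    (hxy' : d x' y' = L) (hxm' : d x' m' = n) (hmy' : n + d m' y' = L)
    (hxx' : d x x' ≤ n) (hyy' : d y y' ≤ n) (hc : |d x y' - L| ≤ c) :
    d m m' ≤ 3 * c + 3 * D := by
  have hD : 0 ≤ D := by simpa using hd x x x x
  rw [abs_le] at hc
  have hxm'_le : d x m' ≤ n + c + D := by
    have := hd x m' x' y'
    rw [hsymm m' x'] at this
    omega
  have hmy'_le : d m y' ≤ L - n + c + D := by
    have := hd m y' x y
    rw [hsymm m x, hsymm y' y, hsymm y' x] at this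
    omega
  have := hd m m' x y'
  rw [hsymm m x, hsymm m' x] at this
  omega

end FourPoint

section WordLength

variable {G : Type*} [Group G] {S : Set G}

/-- The word length of `g` with respect to `S`, as a natural number; it is meaningful when `S`
generates the group. -/
noncomputable def wordLength (S : Set G) (g : G) : ℕ :=
  sInf {n | ∃ l : List G, (∀ x ∈ l, x ∈ S ∨ x⁻¹ ∈ S) ∧ l.prod = g ∧ l.length = n}

lemma wordLength_prod_le {l : List G} (hl : ∀ x ∈ l, x ∈ S ∨ x⁻¹ ∈ S) :
    wordLength S l.prod ≤ l.length :=
  Nat.sInf_le ⟨l, hl, rfl, rfl⟩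

variable (hS : Subgroup.closure S = ⊤)
include hS

lemma exists_prod_eq_length_eq_wordLength (g : G) :
    ∃ l : List G, (∀ x ∈ l, x ∈ S ∨ x⁻¹ ∈ S) ∧ l.prod = g ∧ l.length = wordLength S g := by
  have hg : g ∈ (Subgroup.closure S).toSubmonoid := by simp [hS]
  rw [Subgroup.closure_toSubmonoid] at hg
  obtain ⟨l, hl, hprod⟩ := Submonoid.exists_list_of_mem_closure hg
  exact Nat.sInf_mem
    (s := {n | ∃ l : List G, (∀ x ∈ l, x ∈ S ∨ x⁻¹ ∈ S) ∧ l.prod = g ∧ l.length = n})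
    ⟨_, l, hl, hprod, rfl⟩

lemma wordDist_eq_wordLength (g h : G) : wordDist S g h = wordLength S (g⁻¹ * h) := by
  obtain ⟨l, hl, hprod, hlen⟩ := exists_prod_eq_length_eq_wordLength hS (g⁻¹ * h)
  refine IsLeast.csInf_eq ⟨⟨l, hl, hprod, by rw [hlen]⟩, ?_⟩
  rintro _ ⟨l', hl', hprod', rfl⟩
  rw [← hprod']
  exact_mod_cast wordLength_prod_le hl'

lemma wordLength_mul_le (g h : G) : wordLength S (g * h) ≤ wordLength S g + wordLength S h := by
  obtain ⟨l, hl, rfl, hlen⟩ := exists_prod_eq_length_eq_wordLength hS g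
  obtain ⟨l', hl', rfl, hlen'⟩ := exists_prod_eq_length_eq_wordLength hS h
  rw [← hlen, ← hlen', ← List.prod_append, ← List.length_append]
  exact wordLength_prod_le (List.forall_mem_append.2 ⟨hl, hl'⟩)

lemma wordLength_inv_le (g : G) : wordLength S g⁻¹ ≤ wordLength S g := by
  obtain ⟨l, hl, rfl, hlen⟩ := exists_prod_eq_length_eq_wordLength hS g
  have hinv : ∀ x ∈ (l.map (·⁻¹)).reverse, x ∈ S ∨ x⁻¹ ∈ S := by
    simp only [List.mem_reverse, List.forall_mem_map, inv_inv]
    exact fun x hx => (hl x hx).symm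
  simpa [List.prod_inv_reverse, hlen] using wordLength_prod_le hinv

lemma wordLength_inv (g : G) : wordLength S g⁻¹ = wordLength S g :=
  (wordLength_inv_le hS g).antisymm (by simpa using wordLength_inv_le hS g⁻¹)

lemma wordLength_inv_mul_comm (g h : G) : wordLength S (g⁻¹ * h) = wordLength S (h⁻¹ * g) := by
  rw [← wordLength_inv hS (g⁻¹ * h), mul_inv_rev, inv_inv]

lemma exists_wordLength_eq_add {g : G} {n : ℕ} (hn : n ≤ wordLength S g) :
    ∃ m, wordLength S m = n ∧ wordLength S g = n + wordLength S (m⁻¹ * g) := by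
  obtain ⟨l, hl, hprod, hlen⟩ := exists_prod_eq_length_eq_wordLength hS g
  have hdrop : (l.take n).prod⁻¹ * g = (l.drop n).prod := by
    rw [inv_mul_eq_iff_eq_mul, List.prod_take_mul_prod_drop, hprod]
  have htake_le := wordLength_prod_le fun x hx => hl x (List.mem_of_mem_take (i := n) hx)
  have hdrop_le := wordLength_prod_le fun x hx => hl x (List.mem_of_mem_drop (i := n) hx)
  have hmul := wordLength_mul_le hS (l.take n).prod (l.drop n).prod
  rw [List.prod_take_mul_prod_drop, hprod] at hmul
  rw [List.length_take] at htake_le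
  rw [List.length_drop] at hdrop_le
  exact ⟨(l.take n).prod, by omega, by rw [hdrop]; omega⟩

lemma finite_setOf_wordLength_le (hfin : S.Finite) (n : ℕ) : {g | wordLength S g ≤ n}.Finite := by
  have : Finite {x // x ∈ S ∨ x⁻¹ ∈ S} := (hfin.union hfin.inv).to_subtype
  refine ((List.finite_length_le {x // x ∈ S ∨ x⁻¹ ∈ S} n).image
    fun l => (l.map Subtype.val).prod).subset fun g hg => ?_
  obtain ⟨l, hl, hprod, hlen⟩ := exists_prod_eq_length_eq_wordLength hS g
  lift l to List {x // x ∈ S ∨ x⁻¹ ∈ S} using hl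
  exact ⟨l, by simpa [← hlen] using hg, hprod⟩

lemma isFourPoint_wordLength {δ : ℝ} {D : ℤ} (hD : 2 * δ ≤ D) (hδ : ∀ w x y z : G,
      gromovProd S w x y ≥ min (gromovProd S w x z) (gromovProd S w y z) - δ) :
    IsFourPoint (fun x y : G => (wordLength S (x⁻¹ * y) : ℤ)) D := by
  intro x y z w
  have hmin := hδ w x y z
  simp only [gromovProd, wordDist_eq_wordLength hS, ge_iff_le, tsub_le_iff_right,
    min_le_iff] at hmin
  rw [← sub_le_iff_le_add, le_max_iff, sub_le_iff_le_add, sub_le_iff_le_add]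
  rify
  exact hmin.imp (fun _ => by linarith) (fun _ => by linarith)

end WordLength

section Busemann

variable {G : Type*} [Group G] {S : Set G} {D : ℤ}

/-- The Busemann function of the point `z⁻¹`, normalised to vanish at `1`: the difference of the
word distances from `z⁻¹` to `g` and to `1`. -/
noncomputable def busemann (S : Set G) (z g : G) : ℤ :=
  wordLength S (z * g) - wordLength S z

variable (hS : Subgroup.closure S = ⊤)
include hS

lemma abs_busemann_le (z g : G) : |busemann S z g| ≤ wordLength S g := by
  have hmul := wordLength_mul_le hS z g
  have hmul_inv := wordLength_mul_le hS (z * g) g⁻¹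
  rw [mul_inv_cancel_right, wordLength_inv hS] at hmul_inv
  rw [busemann, abs_le]
  omega

variable (hd : IsFourPoint (fun x y : G => (wordLength S (x⁻¹ * y) : ℤ)) D)
include hd

lemma abs_busemann_mul_sub_sub_le {z g h : G} (hzg : Commute z g)
    (hz : wordLength S g + wordLength S h ≤ wordLength S z) :
    |busemann S z (g * h) - busemann S z g - busemann S z h| ≤ D := by
  have hg := abs_le.1 (abs_busemann_le hS z g)
  have hh := abs_le.1 (abs_busemann_le hS z h)
  have hz_conj : g⁻¹ * (z * g) = z := by rw [hzg.eq, inv_mul_cancel_left]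
  have hzh_conj : g⁻¹ * (z * (g * h)) = z * h := by rw [← mul_assoc z, ← mul_assoc, hz_conj]
  have hz_inv : (z * g)⁻¹ * g = z⁻¹ := by rw [hzg.eq, mul_inv_rev, inv_mul_cancel_right]
  have hh_cancel : (z * g)⁻¹ * (z * (g * h)) = h := by rw [← mul_assoc z, inv_mul_cancel_left]
  have hupper := hd g (z * g) 1 (z * (g * h))
  have hlower := hd 1 (z * g) g (z * (g * h))
  simp only [inv_one, one_mul, mul_one, hz_conj, hzh_conj, hz_inv, hh_cancel, wordLength_inv hS]
    at hupper hlower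
  unfold busemann at hg hh ⊢
  rw [abs_le]
  omega

lemma wordLength_conj_le {z h m : G} {n : ℕ} {c : ℤ} (hzh : Commute z h) (hh : wordLength S h ≤ n)
    (hz : 2 * n ≤ wordLength S z) (hm : wordLength S m = n)
    (hmz : wordLength S z = n + wordLength S (m⁻¹ * z)) (hc : |busemann S z h| ≤ c) :
    wordLength S (m⁻¹ * h * m) ≤ 3 * c + 3 * D := by
  rw [mul_assoc]
  have hzhz : z⁻¹ * (h * z) = h := by rw [← hzh.eq, inv_mul_cancel_left]
  rw [busemann, hzh.eq] at hc
  exact hd.dist_le_of_synchronised (fun x y => by rw [wordLength_inv_mul_comm hS])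
    (x := 1) (y := z) (m := m) (x' := h) (y' := h * z) (m' := h * m) hz
    (by simp) (by simp [hm]) (by simp [hmz]) (by simp) (by simp [hm]) (by simp [hmz, mul_assoc])
    (by simpa using hh) (by simpa only [hzhz, Nat.cast_le] using hh)
    (by simpa only [inv_one, one_mul] using hc)

lemma card_le_of_abs_busemann_le (hfin : S.Finite) {z : G} {n : ℕ} {c : ℤ} {F : Finset G}
    (hzF : ∀ h ∈ F, Commute z h) (hF : ∀ h ∈ F, wordLength S h ≤ n)
    (hz : 2 * n ≤ wordLength S z) (hc : ∀ h ∈ F, |busemann S z h| ≤ c) :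
    F.card ≤ {g | wordLength S g ≤ (3 * c + 3 * D).toNat}.ncard := by
  obtain ⟨m, hm, hmz⟩ := exists_wordLength_eq_add hS (g := z) (n := n) (by omega)
  rw [← Set.ncard_coe_finset]
  refine Set.ncard_le_ncard_of_injOn (fun h => m⁻¹ * h * m) (fun h hh => ?_)
    (fun h _ h' _ => by simp) (finite_setOf_wordLength_le hS hfin _)
  have := wordLength_conj_le hS hd (hzF h hh) (hF h hh) hz hm hmz (hc h hh)
  rw [Set.mem_ofPred_eq]
  omega

end Busemann

section Limit

variable {G : Type*} [Group G] {S : Set G} {D : ℤ}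

lemma exists_eventually_eq_of_finite_range {α β : Type*} (U : Ultrafilter α) {φ : α → β}
    (hφ : (Set.range φ).Finite) : ∃ b, ∀ᶠ a in U, φ a = b := by
  obtain ⟨b, -, hb⟩ := Ultrafilter.eq_pure_of_finite_mem (f := U.map φ) hφ Filter.range_mem_map
  have hmem : {b} ∈ U.map φ := hb ▸ Set.mem_singleton b
  exact ⟨b, hmem⟩

lemma finite_of_forall_finset_card_le {α : Type*} {s : Set α} {n : ℕ}
    (hs : ∀ F : Finset α, ↑F ⊆ s → F.card ≤ n) : s.Finite := by
  by_contra hinf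
  obtain ⟨F, hFs, hF⟩ := Set.Infinite.exists_subset_card_eq hinf (n + 1)
  have := hs F hFs
  omega

variable (hS : Subgroup.closure S = ⊤)
include hS

lemma exists_eventually_busemann_eq (U : Ultrafilter (Subgroup.center G)) :
    ∃ f : G → ℤ, ∀ g, ∀ᶠ z : Subgroup.center G in U, busemann S z g = f g := by
  refine Classical.skolem.1 fun g => exists_eventually_eq_of_finite_range U ?_
  refine (Set.finite_Icc (-(wordLength S g : ℤ)) (wordLength S g)).subset ?_
  rintro _ ⟨z, rfl⟩
  exact abs_le.1 (abs_busemann_le hS z g)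

variable (hfin : S.Finite)
include hfin

lemma eventually_le_wordLength_center {U : Filter (Subgroup.center G)} (hU : U ≤ Filter.cofinite)
    (n : ℕ) : ∀ᶠ z : Subgroup.center G in U, n ≤ wordLength S (z : G) := by
  refine hU (Filter.eventually_cofinite.2 ?_)
  refine ((finite_setOf_wordLength_le hS hfin n).preimage
    Subtype.val_injective.injOn).subset fun z hz => ?_
  exact (not_le.1 hz).le

variable {U : Filter (Subgroup.center G)} [U.NeBot] (hU : U ≤ Filter.cofinite) {f : G → ℤ}
  (hf : ∀ g, ∀ᶠ z : Subgroup.center G in U, busemann S z g = f g)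
  (hd : IsFourPoint (fun x y : G => (wordLength S (x⁻¹ * y) : ℤ)) D)
include hU hf hd

lemma isQuasimorphism_of_eventually_busemann_eq : IsQuasimorphism f D := by
  intro g h
  obtain ⟨z, hz, hzg, hzh, hzgh⟩ := ((eventually_le_wordLength_center hS hfin hU
    (wordLength S g + wordLength S h)).and ((hf g).and ((hf h).and (hf (g * h))))).exists
  rw [← hzg, ← hzh, ← hzgh]
  exact abs_busemann_mul_sub_sub_le hS hd (Subgroup.mem_center_iff.1 z.2 g).symm hz

lemma finite_setOf_abs_le_of_eventually_busemann_eq (c : ℤ) : {g | |f g| ≤ c}.Finite := by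
  refine finite_of_forall_finset_card_le (n := {g | wordLength S g ≤ (3 * c + 3 * D).toNat}.ncard)
    fun F hF => ?_
  obtain ⟨z, hz, hzF⟩ := ((eventually_le_wordLength_center hS hfin hU
    (2 * F.sup (wordLength S))).and ((Filter.eventually_all_finset F).2 fun h _ => hf h)).exists
  exact card_le_of_abs_busemann_le hS hd hfin
    (fun h _ => (Subgroup.mem_center_iff.1 z.2 h).symm) (fun h hh => Finset.le_sup hh) hz
    (fun h hh => hzF h hh ▸ hF hh)

end Limit

lemma IsHyperbolicGroup.exists_isQuasimorphism_finite_setOf_abs_le {G : Type*} [Group G]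
    (hG : IsHyperbolicGroup G) [Infinite (Subgroup.center G)] :
    ∃ (f : G → ℤ) (D : ℤ), IsQuasimorphism f D ∧ ∀ c, {g | |f g| ≤ c}.Finite := by
  obtain ⟨S, hfin, hS, δ, -, hδ⟩ := hG
  have hd := isFourPoint_wordLength hS (Int.le_ceil (2 * δ)) hδ
  have hU := Filter.hyperfilter_le_cofinite (α := Subgroup.center G)
  obtain ⟨f, hf⟩ := exists_eventually_busemann_eq hS (Filter.hyperfilter (Subgroup.center G))
  exact ⟨f, ⌈2 * δ⌉, isQuasimorphism_of_eventually_busemann_eq hS hfin hU hf hd,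
    finite_setOf_abs_le_of_eventually_busemann_eq hS hfin hU hf hd⟩

theorem stmt_9_general {G : Type*} [Group G] (hG : IsHyperbolicGroup G)
    (hne : ¬ ∃ H : Subgroup G, H.FiniteIndex ∧ IsCyclic H) :
    (Subgroup.center G : Set G).Finite := by
  by_contra hinf
  have : Infinite (Subgroup.center G) := Set.infinite_coe_iff.2 hinf
  obtain ⟨f, D, hf, hfin⟩ := hG.exists_isQuasimorphism_finite_setOf_abs_le
  exact hne (hf.exists_finiteIndex_isCyclic hfin)

/-- A non-torsion, non-elementary hyperbolic group has finite center. -/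
theorem stmt_9 {G : Type*} [Group G] (hG : IsHyperbolicGroup G)
    (hnt : ∃ g : G, ∀ n : ℤ, n ≠ 0 → g ^ n ≠ 1)
    (hne : ¬ ∃ H : Subgroup G, H.FiniteIndex ∧ IsCyclic H) :
    (Subgroup.center G : Set G).Finite :=
  stmt_9_general hG hne
end
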